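/- Let Ω ⊂ ℝⁿ be a bounded connected open set whose signed distance function d is C² on a neighborhood of ∂Ω. Assume condition (reg22), condition (reg2) (β-Hölder continuity of σ with β ∈ (1/2,1]), condition (irrelevant), and that F satisfies the Strong Maximum Principle in Ω. If u : Ω → ℝ is upper semicontinuous, is a viscosity subsolution of F[u]=0 in Ω, and there exists κ > 0 with limsup_{x→∂Ω} u(x) d(x)^κ ≤ 0, then u is constant. -/

import Mathlib

open scoped InnerProductSpace Matrix
open Filter

noncomputable section

/-- The signed distance to the boundary of `Ω`:
`d(x) = dist(x, Ωᶜ) - dist(x, closure Ω)`. -/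
def sdist {n : ℕ} (Ω : Set (EuclideanSpace ℝ (Fin n))) (x : EuclideanSpace ℝ (Fin n)) : ℝ :=
  Metric.infDist x Ωᶜ - Metric.infDist x (closure Ω)

/-- The distance to the topological boundary of `Ω`. -/
def bdist {n : ℕ} (Ω : Set (EuclideanSpace ℝ (Fin n))) (x : EuclideanSpace ℝ (Fin n)) : ℝ :=
  Metric.infDist x (frontier Ω)

/-- The Frobenius (Euclidean) norm of a matrix. -/
def mnorm {n r : ℕ} (M : Matrix (Fin n) (Fin r) ℝ) : ℝ :=
  Real.sqrt (∑ i, ∑ j, M i j ^ 2)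

/-- The quadratic form `v ↦ v ⬝ X v`. -/
def quadForm {n : ℕ} (X : Matrix (Fin n) (Fin n) ℝ) (v : EuclideanSpace ℝ (Fin n)) : ℝ :=
  ∑ i, ∑ j, X i j * v i * v j

/-- `Mᵀ v` as a vector in `ℝʳ` (used for `σ(x,α)ᵀ Dd(x)`). -/
def sigmaT {n r : ℕ} (M : Matrix (Fin n) (Fin r) ℝ) (v : EuclideanSpace ℝ (Fin n)) :
    Fin r → ℝ :=
  Matrix.mulVec Mᵀ (fun i => v i)

/-- The second-order superjet of `u` at `x` relative to `S`. -/
def J2plus {n : ℕ} (S : Set (EuclideanSpace ℝ (Fin n))) (u : EuclideanSpace ℝ (Fin n) → ℝ)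
    (x : EuclideanSpace ℝ (Fin n)) :
    Set (EuclideanSpace ℝ (Fin n) × Matrix (Fin n) (Fin n) ℝ) :=
  { pX | pX.2.IsSymm ∧ ∀ ε > (0 : ℝ), ∀ᶠ y in nhdsWithin x S,
      u y - u x - ⟪pX.1, y - x⟫_ℝ - (1 / 2) * quadForm pX.2 (y - x) ≤ ε * ‖y - x‖ ^ 2 }

/-- The second-order subjet of `u` at `x` relative to `S`: `J^{2,-}u = -J^{2,+}(-u)`. -/
def J2minus {n : ℕ} (S : Set (EuclideanSpace ℝ (Fin n))) (u : EuclideanSpace ℝ (Fin n) → ℝ)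
    (x : EuclideanSpace ℝ (Fin n)) :
    Set (EuclideanSpace ℝ (Fin n) × Matrix (Fin n) (Fin n) ℝ) :=
  { qZ | (-qZ.1, -qZ.2) ∈ J2plus S (fun y => -u y) x }

/-- The first-order superdifferential of `u` at `x` relative to `S`. -/
def D1plus {n : ℕ} (S : Set (EuclideanSpace ℝ (Fin n))) (u : EuclideanSpace ℝ (Fin n) → ℝ)
    (x : EuclideanSpace ℝ (Fin n)) : Set (EuclideanSpace ℝ (Fin n)) :=
  { q | ∀ ε > (0 : ℝ), ∀ᶠ y in nhdsWithin x S, u y - u x - ⟪q, y - x⟫_ℝ ≤ ε * ‖y - x‖ }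

/-- The Bellman operator `F(x,p,X) = sup_{α ∈ A} (-b(x,α)·p - tr(σσᵀ X))`. -/
def Fop {n m r : ℕ} (A : Set (Fin m → ℝ))
    (b : EuclideanSpace ℝ (Fin n) → (Fin m → ℝ) → EuclideanSpace ℝ (Fin n))
    (σ : EuclideanSpace ℝ (Fin n) → (Fin m → ℝ) → Matrix (Fin n) (Fin r) ℝ)
    (x p : EuclideanSpace ℝ (Fin n)) (X : Matrix (Fin n) (Fin n) ℝ) : ℝ :=
  sSup ((fun α => -⟪b x α, p⟫_ℝ - Matrix.trace (σ x α * (σ x α)ᵀ * X)) '' A)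

/-- The Hamiltonian `H(x,p,X) = sup_{α ∈ A} (-b(x,α)·p - tr(σσᵀ X) - l(x,α))`. -/
def Hop {n m r : ℕ} (A : Set (Fin m → ℝ))
    (b : EuclideanSpace ℝ (Fin n) → (Fin m → ℝ) → EuclideanSpace ℝ (Fin n))
    (σ : EuclideanSpace ℝ (Fin n) → (Fin m → ℝ) → Matrix (Fin n) (Fin r) ℝ)
    (l : EuclideanSpace ℝ (Fin n) → (Fin m → ℝ) → ℝ)
    (x p : EuclideanSpace ℝ (Fin n)) (X : Matrix (Fin n) (Fin n) ℝ) : ℝ :=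
  sSup ((fun α => -⟪b x α, p⟫_ℝ - Matrix.trace (σ x α * (σ x α)ᵀ * X) - l x α) '' A)

/-- The set of projections of `x` onto `∂Ω`. -/
def projSet {n : ℕ} (Ω : Set (EuclideanSpace ℝ (Fin n))) (x : EuclideanSpace ℝ (Fin n)) :
    Set (EuclideanSpace ℝ (Fin n)) :=
  { z | z ∈ frontier Ω ∧ dist x z = bdist Ω x }

/-- The interior normal directions at a boundary point `z`. -/
def normalDirs {n : ℕ} (Ω : Set (EuclideanSpace ℝ (Fin n))) (z : EuclideanSpace ℝ (Fin n)) :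
    Set (EuclideanSpace ℝ (Fin n)) :=
  { ν | ‖ν‖ = 1 ∧ ∃ x ∈ Ω, x = z + bdist Ω x • ν }

/-!
Add the penalty `-ε d ^ (-κ)` to `u`. By the growth condition the penalized function attains its
maximum over `Ω`, and at a maximum point `x` the penalty, being `C²`, provides an element of the
superjet of `u`. Take the control `ᾱ` attached to the projection `x̄` of `x`. Since
`σ(x̄,ᾱ)ᵀ Dd(x̄) = 0` and `Dd(x) = Dd(x̄)`, Hölder continuity gives
`|σ(x,ᾱ)ᵀ Dd(x)|² ≤ B² d(x) ^ (2β)`, so the subsolution inequality reads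
`k d(x) ^ (γ + 1) ≤ (κ + 1) B² d(x) ^ (2β)`. As `γ + 1 < 2β` this bounds `d(x)` from below,
uniformly in `ε`. All these maximum points therefore lie in one compact subset of `Ω`, and letting
`ε → 0` shows that `u` itself attains its maximum.
-/

open scoped Topology

section Taylor

variable {E F : Type*} [NormedAddCommGroup E] [NormedSpace ℝ E] [NormedAddCommGroup F]
  [NormedSpace ℝ F]

theorem isLittleO_sub_of_hasFDerivAt_isLittleO {g : E → F} {g' : E → E →L[ℝ] F} {x : E}
    (hg : ∀ᶠ y in 𝓝 x, HasFDerivAt g (g' y) y) (hg' : g' =o[𝓝 x] fun y => y - x) :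
    (fun y => g y - g x) =o[𝓝 x] fun y => ‖y - x‖ ^ 2 := by
  refine Asymptotics.isLittleO_iff.2 fun ε hε => ?_
  obtain ⟨ρ, hρ, hball⟩ := Metric.eventually_nhds_iff_ball.1 (hg.and (hg'.def hε))
  filter_upwards [Metric.ball_mem_nhds x hρ] with y hy
  have hsub : Metric.closedBall x ‖y - x‖ ⊆ Metric.ball x ρ :=
    Metric.closedBall_subset_ball (mem_ball_iff_norm.1 hy)
  have hbound : ∀ z ∈ Metric.closedBall x ‖y - x‖, ‖g' z‖ ≤ ε * ‖y - x‖ := fun z hz =>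
    (hball z (hsub hz)).2.trans
      (mul_le_mul_of_nonneg_left (mem_closedBall_iff_norm.1 hz) hε.le)
  have hmean := (convex_closedBall x ‖y - x‖).norm_image_sub_le_of_norm_hasFDerivWithin_le
    (fun z hz => (hball z (hsub hz)).1.hasFDerivWithinAt) hbound
    (Metric.mem_closedBall_self (norm_nonneg _)) (mem_closedBall_iff_norm.2 le_rfl)
  simpa [sq, mul_assoc] using hmean

theorem isLittleO_sub_taylor_two {f : E → F} {f' : E → E →L[ℝ] F} {f'' : E →L[ℝ] E →L[ℝ] F}
    {x : E} (hf : ∀ᶠ y in 𝓝 x, HasFDerivAt f (f' y) y) (hf' : HasFDerivAt f' f'' x) :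
    (fun y => f y - f x - f' x (y - x) - (1 / 2 : ℝ) • f'' (y - x) (y - x)) =o[𝓝 x]
      fun y => ‖y - x‖ ^ 2 := by
  have hsymm := second_derivative_symmetric_of_eventually_of_real hf hf'
  have hder : ∀ᶠ z in 𝓝 x, HasFDerivAt
      (fun y => f y - f x - f' x (y - x) - (1 / 2 : ℝ) • f'' (y - x) (y - x))
      (f' z - f' x - f'' (z - x)) z := by
    filter_upwards [hf] with z hz
    have hid : HasFDerivAt (fun y : E => y - x) (ContinuousLinearMap.id ℝ E) z :=
      (hasFDerivAt_id z).sub_const x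
    have hlin := (f' x).hasFDerivAt.comp z hid
    have hquad := ((f''.hasFDerivAt.comp z hid).clm_apply hid).const_smul (1 / 2 : ℝ)
    refine (((hz.sub_const (f x)).sub hlin).sub hquad).congr_fderiv ?_
    ext w
    have hhalf : (1 / 2 : ℝ) • (f'' (z - x) w + f'' w (z - x)) = f'' (z - x) w := by
      rw [hsymm w, ← two_smul ℝ, smul_smul]; norm_num
    simpa using hhalf
  simpa using isLittleO_sub_of_hasFDerivAt_isLittleO hder (hasFDerivAt_iff_isLittleO.1 hf')

end Taylor

section Jets

variable {n : ℕ} {f u v : EuclideanSpace ℝ (Fin n) → ℝ}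
  {G : EuclideanSpace ℝ (Fin n) → EuclideanSpace ℝ (Fin n)} {X : Matrix (Fin n) (Fin n) ℝ}
  {x : EuclideanSpace ℝ (Fin n)} {S : Set (EuclideanSpace ℝ (Fin n))}

/-- `f` is twice differentiable at `x`, with gradient field `G` near `x` and Hessian matrix `X`
at `x`. It supplies the smooth test functions of the viscosity theory. -/
structure HasHessianAt (f : EuclideanSpace ℝ (Fin n) → ℝ)
    (G : EuclideanSpace ℝ (Fin n) → EuclideanSpace ℝ (Fin n)) (X : Matrix (Fin n) (Fin n) ℝ)
    (x : EuclideanSpace ℝ (Fin n)) : Prop where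
  eventually_hasGradientAt : ∀ᶠ y in 𝓝 x, HasGradientAt f (G y) y
  hasFDerivAt_gradient :
    HasFDerivAt G (LinearMap.toContinuousLinearMap (Matrix.toEuclideanLin X)) x

theorem quadForm_eq_inner (X : Matrix (Fin n) (Fin n) ℝ) (w : EuclideanSpace ℝ (Fin n)) :
    quadForm X w = ⟪Matrix.toEuclideanLin X w, w⟫_ℝ := by
  simp only [quadForm, Matrix.toLpLin_apply, PiLp.inner_apply, Matrix.mulVec, dotProduct,
    RCLike.inner_apply, conj_trivial, Finset.mul_sum]
  exact Finset.sum_congr rfl fun i _ => Finset.sum_congr rfl fun j _ => by ring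

namespace HasHessianAt

theorem hasGradientAt (h : HasHessianAt f G X x) : HasGradientAt f (G x) x :=
  h.eventually_hasGradientAt.self_of_nhds

theorem eventually_hasFDerivAt (h : HasHessianAt f G X x) :
    ∀ᶠ y in 𝓝 x, HasFDerivAt f (innerSL ℝ (G y)) y :=
  h.eventually_hasGradientAt.mono fun _ hy => hy.hasFDerivAt

theorem hasFDerivAt_innerSL (h : HasHessianAt f G X x) :
    HasFDerivAt (fun y => innerSL ℝ (G y))
      ((innerSL ℝ).comp (LinearMap.toContinuousLinearMap (Matrix.toEuclideanLin X))) x :=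
  (innerSL ℝ (E := EuclideanSpace ℝ (Fin n))).hasFDerivAt.comp x h.hasFDerivAt_gradient

theorem isSymm (h : HasHessianAt f G X x) : X.IsSymm := by
  ext i j
  simpa [Matrix.toLpLin_apply, EuclideanSpace.inner_single_right] using
    second_derivative_symmetric_of_eventually_of_real h.eventually_hasFDerivAt
      h.hasFDerivAt_innerSL (EuclideanSpace.single i 1) (EuclideanSpace.single j 1)

theorem isLittleO_sub_taylor (h : HasHessianAt f G X x) :
    (fun y => f y - f x - ⟪G x, y - x⟫_ℝ - (1 / 2) * quadForm X (y - x)) =o[𝓝 x]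
      fun y => ‖y - x‖ ^ 2 := by
  simp only [quadForm_eq_inner]
  exact isLittleO_sub_taylor_two h.eventually_hasFDerivAt h.hasFDerivAt_innerSL

theorem comp {φ φ' : ℝ → ℝ} {c : ℝ} (hφ : ∀ᶠ t in 𝓝 (f x), HasDerivAt φ (φ' t) t)
    (hφ' : HasDerivAt φ' c (f x)) (h : HasHessianAt f G X x) :
    HasHessianAt (fun y => φ (f y)) (fun y => φ' (f y) • G y)
      (φ' (f x) • X + c • Matrix.vecMulVec (G x).ofLp (G x).ofLp) x where
  eventually_hasGradientAt := by
    filter_upwards [h.eventually_hasGradientAt, h.hasGradientAt.continuousAt.eventually hφ]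
      with y hy hφy
    rw [hasGradientAt_iff_hasFDerivAt]
    exact (hφy.comp_hasFDerivAt y hy.hasFDerivAt).congr_fderiv (by simp)
  hasFDerivAt_gradient := by
    refine ((hφ'.comp_hasFDerivAt x h.hasGradientAt.hasFDerivAt).smul
      h.hasFDerivAt_gradient).congr_fderiv ?_
    ext w i
    simp [Matrix.toLpLin_apply, Matrix.vecMulVec_mulVec, PiLp.inner_apply, dotProduct, mul_comm,
      mul_left_comm]

theorem mem_J2plus_of_isLocalMaxOn_sub (h : HasHessianAt v G X x)
    (hmax : IsLocalMaxOn (fun y => u y - v y) S x) : (G x, X) ∈ J2plus S u x := by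
  refine ⟨h.isSymm, fun ε hε => ?_⟩
  filter_upwards [hmax, (h.isLittleO_sub_taylor.def hε).filter_mono nhdsWithin_le_nhds]
    with y hy htaylor
  have hle := (le_abs_self _).trans htaylor
  rw [norm_pow, norm_norm] at hle
  linarith

end HasHessianAt

end Jets

section Operator

variable {n r : ℕ}

/-- The linear operator `(p, X) ↦ -v ⬝ p - tr(M Mᵀ X)` with drift `v` and dispersion matrix `M`:
the function whose supremum over the controls is the Bellman operator `Fop`. -/
def linearOp (v : EuclideanSpace ℝ (Fin n)) (M : Matrix (Fin n) (Fin r) ℝ)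
    (p : EuclideanSpace ℝ (Fin n)) (X : Matrix (Fin n) (Fin n) ℝ) : ℝ :=
  -⟪v, p⟫_ℝ - Matrix.trace (M * Mᵀ * X)

theorem mnorm_nonneg (M : Matrix (Fin n) (Fin r) ℝ) : 0 ≤ mnorm M :=
  Real.sqrt_nonneg _

theorem trace_mul_transpose_mul_vecMulVec (M : Matrix (Fin n) (Fin r) ℝ)
    (p : EuclideanSpace ℝ (Fin n)) :
    Matrix.trace (M * Mᵀ * Matrix.vecMulVec p.ofLp p.ofLp) = sigmaT M p ⬝ᵥ sigmaT M p := by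
  rw [Matrix.mul_assoc, Matrix.trace_mul_comm, Matrix.mul_vecMulVec, Matrix.vecMulVec_mul,
    Matrix.trace_vecMulVec, ← Matrix.mulVec_transpose, sigmaT]

theorem sigmaT_dotProduct_self_le (M : Matrix (Fin n) (Fin r) ℝ)
    (p : EuclideanSpace ℝ (Fin n)) :
    sigmaT M p ⬝ᵥ sigmaT M p ≤ mnorm M ^ 2 * ‖p‖ ^ 2 := by
  rw [mnorm, Real.sq_sqrt (by positivity), EuclideanSpace.norm_sq_eq, Finset.sum_comm,
    Finset.sum_mul]
  refine Finset.sum_le_sum fun j _ => ?_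
  simpa [sigmaT, Matrix.mulVec, dotProduct, sq] using
    Finset.sum_mul_sq_le_sq_mul_sq Finset.univ (fun i => M i j) (fun i => p i)

theorem sigmaT_sub (M N : Matrix (Fin n) (Fin r) ℝ) (p : EuclideanSpace ℝ (Fin n)) :
    sigmaT (M - N) p = sigmaT M p - sigmaT N p := by
  simp only [sigmaT, Matrix.transpose_sub, Matrix.sub_mulVec]

theorem linearOp_smul_smul_add_smul_vecMulVec (v p : EuclideanSpace ℝ (Fin n))
    (M : Matrix (Fin n) (Fin r) ℝ) (X : Matrix (Fin n) (Fin n) ℝ) (a c : ℝ) :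
    linearOp v M (a • p) (a • X + c • Matrix.vecMulVec p.ofLp p.ofLp) =
      -a * (⟪v, p⟫_ℝ + Matrix.trace (M * Mᵀ * X)) - c * (sigmaT M p ⬝ᵥ sigmaT M p) := by
  rw [linearOp, Matrix.mul_add, Matrix.trace_add, Matrix.mul_smul, Matrix.mul_smul,
    Matrix.trace_smul, Matrix.trace_smul, trace_mul_transpose_mul_vecMulVec, inner_smul_right,
    smul_eq_mul, smul_eq_mul]
  ring

open scoped Matrix.Norms.Frobenius in
theorem mnorm_eq_norm (M : Matrix (Fin n) (Fin r) ℝ) : mnorm M = ‖M‖ := by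
  simp [mnorm, Matrix.frobenius_norm_def, Real.sqrt_eq_rpow]

open scoped Matrix.Norms.Frobenius in
theorem exists_forall_linearOp_le (C K : ℝ) (p : EuclideanSpace ℝ (Fin n))
    (X : Matrix (Fin n) (Fin n) ℝ) :
    ∃ R, ∀ (v : EuclideanSpace ℝ (Fin n)) (M : Matrix (Fin n) (Fin r) ℝ),
      ‖v‖ ≤ C → mnorm M ≤ K → linearOp v M p X ≤ R := by
  obtain ⟨T, hT, htr⟩ := SemilinearMapClass.bound_of_continuous
    (Matrix.traceLinearMap (Fin n) ℝ ℝ) (LinearMap.continuous_of_finiteDimensional _)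
  refine ⟨C * ‖p‖ + T * (K * K * ‖X‖), fun v M hv hM => ?_⟩
  rw [mnorm_eq_norm] at hM
  have hK : 0 ≤ K := (norm_nonneg M).trans hM
  have hinner : -⟪v, p⟫_ℝ ≤ C * ‖p‖ :=
    (neg_le_abs _).trans ((abs_real_inner_le_norm v p).trans (by gcongr))
  have hprod : ‖M * Mᵀ * X‖ ≤ K * K * ‖X‖ :=
    calc ‖M * Mᵀ * X‖ ≤ ‖M * Mᵀ‖ * ‖X‖ := Matrix.frobenius_norm_mul _ _
      _ ≤ ‖M‖ * ‖Mᵀ‖ * ‖X‖ := by gcongr; exact Matrix.frobenius_norm_mul _ _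
      _ ≤ K * K * ‖X‖ := by rw [Matrix.frobenius_norm_transpose]; gcongr
  have htrace : -Matrix.trace (M * Mᵀ * X) ≤ T * (K * K * ‖X‖) :=
    (neg_le_abs _).trans ((htr _).trans (mul_le_mul_of_nonneg_left hprod hT.le))
  rw [linearOp]
  linarith

theorem linearOp_le_Fop {m : ℕ} {A : Set (Fin m → ℝ)}
    {b : EuclideanSpace ℝ (Fin n) → (Fin m → ℝ) → EuclideanSpace ℝ (Fin n)}
    {σ : EuclideanSpace ℝ (Fin n) → (Fin m → ℝ) → Matrix (Fin n) (Fin r) ℝ}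
    {x : EuclideanSpace ℝ (Fin n)} (hb : ∃ C, ∀ α ∈ A, ‖b x α‖ ≤ C)
    (hσ : ∃ K, ∀ α ∈ A, mnorm (σ x α) ≤ K) (p : EuclideanSpace ℝ (Fin n))
    (X : Matrix (Fin n) (Fin n) ℝ) {α : Fin m → ℝ} (hα : α ∈ A) :
    linearOp (b x α) (σ x α) p X ≤ Fop A b σ x p X := by
  obtain ⟨C, hC⟩ := hb
  obtain ⟨K, hK⟩ := hσ
  obtain ⟨R, hR⟩ := exists_forall_linearOp_le (r := r) C K p X
  exact le_csSup ⟨R, Set.forall_mem_image.2 fun a ha => hR _ _ (hC a ha) (hK a ha)⟩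
    (Set.mem_image_of_mem _ hα)

end Operator

section SignedDistance

theorem infDist_lineMap {E : Type*} [SeminormedAddCommGroup E] [NormedSpace ℝ E] {s : Set E}
    {x z : E} (hz : z ∈ s) (hxz : Metric.infDist x s = dist x z) {t : ℝ}
    (ht : t ∈ Set.Icc (0 : ℝ) 1) :
    Metric.infDist (AffineMap.lineMap x z t) s = (1 - t) * dist x z := by
  have hleft : dist x (AffineMap.lineMap x z t) = t * dist x z := by
    rw [dist_left_lineMap, Real.norm_of_nonneg ht.1]
  have hright : dist (AffineMap.lineMap x z t) z = (1 - t) * dist x z := by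
    rw [dist_lineMap_right, Real.norm_of_nonneg (sub_nonneg.2 ht.2)]
  refine le_antisymm (hright ▸ Metric.infDist_le_dist_of_mem hz) ?_
  have htri := Metric.infDist_le_infDist_add_dist (s := s) (x := x) (y := AffineMap.lineMap x z t)
  linarith

theorem dist_smul_gradient_eq_sub {E : Type*} [NormedAddCommGroup E] [InnerProductSpace ℝ E]
    [CompleteSpace E] {f : E → ℝ} {x z g : E} {t : ℝ} (ht : t ∈ Set.Icc (0 : ℝ) 1)
    (hf : ∀ s ∈ Set.Icc (0 : ℝ) 1, f (AffineMap.lineMap x z s) = (1 - s) * dist x z)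
    (hg : HasGradientAt f g (AffineMap.lineMap x z t)) (hg1 : ‖g‖ = 1) :
    dist x z • g = x - z := by
  have hchain : HasDerivAt (fun s => f (AffineMap.lineMap x z s)) ⟪g, z - x⟫_ℝ t := by
    simpa [Function.comp_def] using
      hg.hasFDerivAt.comp_hasDerivAt t AffineMap.hasDerivAt_lineMap
  have haffine : HasDerivAt (fun s : ℝ => (1 - s) * dist x z) (-dist x z) t := by
    simpa using ((hasDerivAt_id t).const_sub 1).mul_const (dist x z)
  have hslope : ⟪g, z - x⟫_ℝ = -dist x z :=
    (uniqueDiffOn_Icc zero_lt_one t ht).eq_deriv _ hchain.hasDerivWithinAt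
      (haffine.hasDerivWithinAt.congr hf (hf t ht))
  -- Equality holds in the Cauchy-Schwarz inequality for `g` and `x - z`.
  have hcs : ⟪g, x - z⟫_ℝ = ‖g‖ * ‖x - z‖ := by
    rw [← neg_sub z x, inner_neg_right, hslope, hg1, neg_neg, one_mul, norm_neg, dist_eq_norm']
  rw [inner_eq_norm_mul_iff_real, hg1, one_smul] at hcs
  rwa [dist_eq_norm]

variable {n : ℕ} {Ω : Set (EuclideanSpace ℝ (Fin n))} {x : EuclideanSpace ℝ (Fin n)}

theorem continuous_sdist (Ω : Set (EuclideanSpace ℝ (Fin n))) : Continuous (sdist Ω) :=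
  (Metric.continuous_infDist_pt _).sub (Metric.continuous_infDist_pt _)

theorem sdist_of_mem_closure (hx : x ∈ closure Ω) : sdist Ω x = Metric.infDist x Ωᶜ := by
  rw [sdist, Metric.infDist_zero_of_mem hx, sub_zero]

theorem sdist_nonpos_of_notMem (hx : x ∉ Ω) : sdist Ω x ≤ 0 := by
  rw [sdist, Metric.infDist_zero_of_mem (Set.mem_compl hx), zero_sub]
  exact neg_nonpos.2 Metric.infDist_nonneg

theorem sdist_pos (hΩo : IsOpen Ω) (hne : Ωᶜ.Nonempty) (hx : x ∈ Ω) : 0 < sdist Ω x := by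
  rw [sdist_of_mem_closure (subset_closure hx)]
  exact (hΩo.isClosed_compl.notMem_iff_infDist_pos hne).1 (Set.notMem_compl_iff.2 hx)

theorem isCompact_setOf_le_sdist (hΩbdd : Bornology.IsBounded Ω) {s : ℝ} (hs : 0 < s) :
    IsCompact {x ∈ Ω | s ≤ sdist Ω x} := by
  have heq : {x ∈ Ω | s ≤ sdist Ω x} = {x | s ≤ sdist Ω x} :=
    Set.ext fun x => and_iff_right_of_imp fun hx =>
      by_contra fun hxΩ => (hs.trans_le hx).not_ge (sdist_nonpos_of_notMem hxΩ)
  refine Metric.isCompact_of_isClosed_isBounded ?_ (hΩbdd.subset (Set.sep_subset _ _))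
  exact heq ▸ isClosed_le continuous_const (continuous_sdist Ω)

theorem exists_mem_frontier_forall_sdist_lineMap_eq (hΩo : IsOpen Ω) (hne : Ωᶜ.Nonempty)
    (hx : x ∈ Ω) :
    ∃ z ∈ frontier Ω, ∀ t ∈ Set.Icc (0 : ℝ) 1,
      sdist Ω (AffineMap.lineMap x z t) = (1 - t) * dist x z := by
  obtain ⟨z, hz, hxz⟩ := hΩo.isClosed_compl.exists_infDist_eq_dist hne x
  have hball : Metric.closedBall x (dist x z) ⊆ closure Ω :=
    hxz ▸ Metric.closedBall_infDist_compl_subset_closure hx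
  have hzcl : z ∈ closure Ω := hball (Metric.mem_closedBall'.2 le_rfl)
  refine ⟨z, hΩo.frontier_eq ▸ ⟨hzcl, hz⟩, fun t ht => ?_⟩
  have hmem : AffineMap.lineMap x z t ∈ closure Ω := hball <| by
    rw [Metric.mem_closedBall, dist_lineMap_left, Real.norm_of_nonneg ht.1]
    exact mul_le_of_le_one_left dist_nonneg ht.2
  rw [sdist_of_mem_closure hmem, infDist_lineMap hz hxz ht]

theorem exists_mem_frontier_dist_eq_gradient_eq (hΩo : IsOpen Ω) (hne : Ωᶜ.Nonempty) {δ₀ : ℝ}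
    {Dd : EuclideanSpace ℝ (Fin n) → EuclideanSpace ℝ (Fin n)}
    (hDd : ∀ x, |sdist Ω x| < δ₀ → HasGradientAt (sdist Ω) (Dd x) x)
    (hDdnorm : ∀ x, |sdist Ω x| < δ₀ → ‖Dd x‖ = 1) (hx : x ∈ Ω) (hxδ : |sdist Ω x| < δ₀) :
    ∃ z ∈ frontier Ω, dist x z = sdist Ω x ∧ Dd x = Dd z := by
  obtain ⟨z, hz, hseg⟩ := exists_mem_frontier_forall_sdist_lineMap_eq hΩo hne hx
  have hdx : sdist Ω x = dist x z := by simpa using hseg 0 (by simp)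
  have hdz : sdist Ω z = 0 := by simpa using hseg 1 (by simp)
  have hzδ : |sdist Ω z| < δ₀ := by
    rw [hdz, abs_zero]; exact (abs_nonneg _).trans_lt hxδ
  have hgx : dist x z • Dd x = x - z :=
    dist_smul_gradient_eq_sub (t := 0) (by simp) hseg (by simpa using hDd x hxδ) (hDdnorm x hxδ)
  have hgz : dist x z • Dd z = x - z :=
    dist_smul_gradient_eq_sub (t := 1) (by simp) hseg (by simpa using hDd z hzδ) (hDdnorm z hzδ)
  have hpos : dist x z ≠ 0 := hdx ▸ (sdist_pos hΩo hne hx).ne'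
  exact ⟨z, hz, hdx.symm, smul_right_injective _ hpos (hgx.trans hgz.symm)⟩

theorem hasHessianAt_sdist {δ₀ : ℝ} {Dd : EuclideanSpace ℝ (Fin n) → EuclideanSpace ℝ (Fin n)}
    {X : Matrix (Fin n) (Fin n) ℝ}
    (hDd : ∀ x, |sdist Ω x| < δ₀ → HasGradientAt (sdist Ω) (Dd x) x)
    (hX : HasFDerivAt Dd (LinearMap.toContinuousLinearMap (Matrix.toEuclideanLin X)) x)
    (hx : |sdist Ω x| < δ₀) : HasHessianAt (sdist Ω) Dd X x :=
  ⟨((continuous_sdist Ω).abs.continuousAt.eventually_lt_const hx).mono hDd, hX⟩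

end SignedDistance

section Penalization

variable {E : Type*} {S K : Set E} {d u v : E → ℝ}

theorem exists_forall_sub_mul_rpow_neg_lt {κ : ℝ} (hκ : 0 < κ)
    (hpos : ∀ x ∈ S, 0 < d x)
    (hgrowth : ∀ ε > 0, ∃ δ > 0, ∀ x ∈ S, d x < δ → u x * d x ^ κ ≤ ε) {ε : ℝ} (hε : 0 < ε)
    (c : ℝ) : ∃ s > 0, ∀ x ∈ S, d x < s → u x - ε * d x ^ (-κ) < c := by
  obtain ⟨η, hη, hsmall⟩ := hgrowth (ε / 2) (half_pos hε)
  have hblowup := (tendsto_rpow_neg_nhdsGT_zero (neg_neg_of_pos hκ)).eventually_gt_atTop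
    (-c / (ε / 2))
  obtain ⟨ρ, hρ, hbig⟩ := mem_nhdsGT_iff_exists_Ioo_subset.1 hblowup
  refine ⟨min η ρ, lt_min hη hρ, fun x hx hxs => ?_⟩
  have hbarrier : -c / (ε / 2) < d x ^ (-κ) := hbig ⟨hpos x hx, hxs.trans_le (min_le_right _ _)⟩
  have hux : u x ≤ ε / 2 * d x ^ (-κ) := by
    rw [Real.rpow_neg (hpos x hx).le, ← div_eq_mul_inv,
      le_div_iff₀ (Real.rpow_pos_of_pos (hpos x hx) κ)]
    exact hsmall x hx (hxs.trans_le (min_le_left _ _))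
  rw [div_lt_iff₀ (half_pos hε)] at hbarrier
  linarith

variable [TopologicalSpace E]

theorem exists_isMaxOn_of_forall_le_off_compact (hu : UpperSemicontinuousOn u S)
    (hK : IsCompact K) (hKS : K ⊆ S) {x₀ : E} (hx₀ : x₀ ∈ K)
    (hoff : ∀ y ∈ S, y ∉ K → u y ≤ u x₀) : ∃ x ∈ S, IsMaxOn u S x := by
  obtain ⟨x, hxK, hmax⟩ := (hu.mono hKS).exists_isMaxOn ⟨x₀, hx₀⟩ hK
  refine ⟨x, hKS hxK, fun y hy => ?_⟩
  by_cases hyK : y ∈ K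
  · exact hmax hyK
  · exact (hoff y hy hyK).trans (hmax hx₀)

theorem exists_isMaxOn_of_forall_exists_isMaxOn_sub_mul (hu : UpperSemicontinuousOn u S)
    (hK : IsCompact K) (hKS : K ⊆ S) (hv : ∀ x ∈ S, 0 ≤ v x)
    (hmax : ∀ ε > 0, ∃ x ∈ K, IsMaxOn (fun y => u y - ε * v y) S x) :
    ∃ x ∈ S, IsMaxOn u S x := by
  obtain ⟨x₁, hx₁, -⟩ := hmax 1 one_pos
  obtain ⟨x₀, hx₀, hx₀max⟩ := (hu.mono hKS).exists_isMaxOn ⟨x₁, hx₁⟩ hK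
  refine ⟨x₀, hKS hx₀, isMaxOn_iff.2 fun y hy => le_of_forall_pos_le_add fun θ hθ => ?_⟩
  have hvy : 0 < v y + 1 := by linarith [hv y hy]
  obtain ⟨x, hx, hxmax⟩ := hmax (θ / (v y + 1)) (by positivity)
  have hpen : θ / (v y + 1) * v y ≤ θ := by
    rw [div_mul_eq_mul_div, div_le_iff₀ hvy]; nlinarith
  have hvx : 0 ≤ θ / (v y + 1) * v x := mul_nonneg (by positivity) (hv x (hKS hx))
  have huy : u y - θ / (v y + 1) * v y ≤ u x - θ / (v y + 1) * v x := hxmax hy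
  have hux : u x ≤ u x₀ := hx₀max hx
  linarith

theorem exists_isMaxOn_sub_mul_rpow_neg (hS : S.Nonempty) (hu : UpperSemicontinuousOn u S)
    (hd : ContinuousOn d S) (hpos : ∀ x ∈ S, 0 < d x)
    (hcompact : ∀ s > 0, IsCompact {x ∈ S | s ≤ d x}) {κ : ℝ} (hκ : 0 < κ)
    (hgrowth : ∀ ε > 0, ∃ δ > 0, ∀ x ∈ S, d x < δ → u x * d x ^ κ ≤ ε) {ε : ℝ} (hε : 0 < ε) :
    ∃ x ∈ S, IsMaxOn (fun y => u y - ε * d y ^ (-κ)) S x := by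
  obtain ⟨x₀, hx₀⟩ := hS
  obtain ⟨s, hs, hlt⟩ :=
    exists_forall_sub_mul_rpow_neg_lt hκ hpos hgrowth hε (u x₀ - ε * d x₀ ^ (-κ))
  have hbarrier : ContinuousOn (fun y => -(ε * d y ^ (-κ))) S :=
    (continuousOn_const.mul (hd.rpow_const fun y hy => Or.inl (hpos y hy).ne')).neg
  have husc : UpperSemicontinuousOn (fun y => u y - ε * d y ^ (-κ)) S := by
    simpa only [sub_eq_add_neg] using hu.add hbarrier.upperSemicontinuousOn
  refine exists_isMaxOn_of_forall_le_off_compact husc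
    (hcompact (min s (d x₀)) (lt_min hs (hpos x₀ hx₀))) (Set.sep_subset _ _)
    ⟨hx₀, min_le_right _ _⟩ fun y hy hyK => (hlt y hy ?_).le
  by_contra! hsy
  exact hyK ⟨hy, (min_le_left _ _).trans hsy⟩

end Penalization

section BoundaryLayer

variable {n r : ℕ} {Ω : Set (EuclideanSpace ℝ (Fin n))} {u : EuclideanSpace ℝ (Fin n) → ℝ}

theorem eventually_mul_rpow_lt_mul_rpow {c k p q : ℝ} (hk : 0 < k) (hqp : q < p) :
    ∀ᶠ t in 𝓝[>] (0 : ℝ), c * t ^ p < k * t ^ q := by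
  have hlim : Tendsto (fun t : ℝ => c * t ^ (p - q)) (𝓝[>] 0) (𝓝 0) := by
    have hcont := (Real.continuousAt_rpow_const 0 (p - q) (Or.inr (sub_pos.2 hqp).le)).const_mul c
    simpa [ContinuousAt, Real.zero_rpow (sub_pos.2 hqp).ne'] using
      hcont.tendsto.mono_left nhdsWithin_le_nhds
  filter_upwards [hlim.eventually_lt_const hk, self_mem_nhdsWithin] with t hlt ht
  calc c * t ^ p = c * t ^ (p - q) * t ^ q := by
        rw [mul_assoc, ← Real.rpow_add ht, sub_add_cancel]
    _ < k * t ^ q := mul_lt_mul_of_pos_right hlt (Real.rpow_pos_of_pos ht q)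

theorem hasHessianAt_mul_rpow {d : EuclideanSpace ℝ (Fin n) → ℝ}
    {G : EuclideanSpace ℝ (Fin n) → EuclideanSpace ℝ (Fin n)} {X : Matrix (Fin n) (Fin n) ℝ}
    {x : EuclideanSpace ℝ (Fin n)} (h : HasHessianAt d G X x) (hx : d x ≠ 0) (ε s : ℝ) :
    HasHessianAt (fun y => ε * d y ^ s) (fun y => (ε * (s * d y ^ (s - 1))) • G y)
      ((ε * (s * d x ^ (s - 1))) • X + (ε * (s * ((s - 1) * d x ^ (s - 1 - 1)))) •
        Matrix.vecMulVec (G x).ofLp (G x).ofLp) x := by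
  refine h.comp (φ := fun t => ε * t ^ s) (φ' := fun t => ε * (s * t ^ (s - 1))) ?_ ?_
  · filter_upwards [isOpen_ne.mem_nhds hx] with t ht
    exact (Real.hasDerivAt_rpow_const (Or.inl ht)).const_mul ε
  · exact ((Real.hasDerivAt_rpow_const (Or.inl hx)).const_mul s).const_mul ε

theorem mul_inner_add_trace_le_of_isMaxOn_sub_mul_rpow_neg {d : EuclideanSpace ℝ (Fin n) → ℝ}
    {G : EuclideanSpace ℝ (Fin n) → EuclideanSpace ℝ (Fin n)} {X : Matrix (Fin n) (Fin n) ℝ}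
    {x v : EuclideanSpace ℝ (Fin n)} {M : Matrix (Fin n) (Fin r) ℝ} (h : HasHessianAt d G X x)
    (hx : 0 < d x) {ε κ : ℝ} (hε : 0 < ε) (hκ : 0 < κ)
    (hsub : ∀ pX ∈ J2plus Ω u x, linearOp v M pX.1 pX.2 ≤ 0)
    (hmax : IsMaxOn (fun y => u y - ε * d y ^ (-κ)) Ω x) :
    d x * (⟪v, G x⟫_ℝ + Matrix.trace (M * Mᵀ * X)) ≤
      (κ + 1) * (sigmaT M (G x) ⬝ᵥ sigmaT M (G x)) := by
  have hle := hsub _ ((hasHessianAt_mul_rpow h hx.ne' ε (-κ)).mem_J2plus_of_isLocalMaxOn_sub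
    hmax.localize)
  rw [linearOp_smul_smul_add_smul_vecMulVec] at hle
  have hfactor : 0 < ε * κ * d x ^ (-κ - 1 - 1) := by positivity
  have hpow : d x ^ (-κ - 1) = d x * d x ^ (-κ - 1 - 1) := by
    rw [Real.rpow_sub_one hx.ne' (-κ - 1), mul_div_cancel₀ _ hx.ne']
  refine sub_nonpos.1 (nonpos_of_mul_nonpos_right (le_of_eq_of_le ?_ hle) hfactor)
  rw [hpow]
  ring

theorem sigmaT_dotProduct_self_le_rpow {M N : Matrix (Fin n) (Fin r) ℝ}
    {p : EuclideanSpace ℝ (Fin n)} {B t β : ℝ} (ht : 0 ≤ t) (hp : ‖p‖ = 1) (hN : sigmaT N p = 0)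
    (hMN : mnorm (M - N) ≤ B * t ^ β) :
    sigmaT M p ⬝ᵥ sigmaT M p ≤ B ^ 2 * t ^ (2 * β) :=
  calc sigmaT M p ⬝ᵥ sigmaT M p = sigmaT (M - N) p ⬝ᵥ sigmaT (M - N) p := by
        rw [sigmaT_sub, hN, sub_zero]
    _ ≤ mnorm (M - N) ^ 2 := by simpa [hp] using sigmaT_dotProduct_self_le (M - N) p
    _ ≤ (B * t ^ β) ^ 2 := pow_le_pow_left₀ (mnorm_nonneg _) hMN 2
    _ = B ^ 2 * t ^ (2 * β) := by
        rw [mul_pow, mul_comm 2 β, Real.rpow_mul ht, Real.rpow_two]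

theorem exists_forall_le_sdist_of_isMaxOn_sub_mul_rpow_neg {ι : Type*} (hΩo : IsOpen Ω)
    (hne : Ωᶜ.Nonempty) {A : Set ι}
    {b : EuclideanSpace ℝ (Fin n) → ι → EuclideanSpace ℝ (Fin n)}
    {σ : EuclideanSpace ℝ (Fin n) → ι → Matrix (Fin n) (Fin r) ℝ} {δ₀ : ℝ} (hδ₀ : 0 < δ₀)
    {Dd : EuclideanSpace ℝ (Fin n) → EuclideanSpace ℝ (Fin n)}
    {D2d : EuclideanSpace ℝ (Fin n) → Matrix (Fin n) (Fin n) ℝ}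
    (hDd : ∀ x, |sdist Ω x| < δ₀ → HasGradientAt (sdist Ω) (Dd x) x)
    (hDdnorm : ∀ x, |sdist Ω x| < δ₀ → ‖Dd x‖ = 1)
    (hD2d : ∀ x, |sdist Ω x| < δ₀ →
      HasFDerivAt Dd (LinearMap.toContinuousLinearMap (Matrix.toEuclideanLin (D2d x))) x)
    {β B : ℝ} (hσ : ∀ x ∈ closure Ω, ∀ y ∈ closure Ω, ∀ α ∈ A,
      mnorm (σ x α - σ y α) ≤ B * ‖x - y‖ ^ β)
    (hirr : ∃ δ > (0 : ℝ), ∃ k > (0 : ℝ), ∃ γ : ℝ, γ < 2 * β - 1 ∧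
      ∀ z ∈ frontier Ω, ∃ α₀ ∈ A, sigmaT (σ z α₀) (Dd z) = 0 ∧
        ∀ x ∈ Ω ∩ Metric.ball z δ,
          k * sdist Ω x ^ γ ≤
            ⟪b x α₀, Dd x⟫_ℝ + Matrix.trace (σ x α₀ * (σ x α₀)ᵀ * D2d x))
    (hsub : ∀ x ∈ Ω, ∀ pX ∈ J2plus Ω u x, ∀ α ∈ A, linearOp (b x α) (σ x α) pX.1 pX.2 ≤ 0)
    {κ : ℝ} (hκ : 0 < κ) :
    ∃ s > 0, ∀ ε > 0, ∀ x ∈ Ω, IsMaxOn (fun y => u y - ε * sdist Ω y ^ (-κ)) Ω x →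
      s ≤ sdist Ω x := by
  obtain ⟨δ, hδ, k, hk, γ, hγ, hirr⟩ := hirr
  obtain ⟨ρ, hρ, hsmall⟩ := mem_nhdsGT_iff_exists_Ioo_subset.1 <|
    eventually_mul_rpow_lt_mul_rpow (c := (κ + 1) * B ^ 2) hk (show γ + 1 < 2 * β by linarith)
  refine ⟨min ρ (min δ δ₀), lt_min hρ (lt_min hδ hδ₀), fun ε hε x hx hmax => ?_⟩
  by_contra! hlt
  obtain ⟨hxρ, hxδ, hxδ₀⟩ : sdist Ω x < ρ ∧ sdist Ω x < δ ∧ sdist Ω x < δ₀ := by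
    simpa only [lt_min_iff] using hlt
  have hpos : 0 < sdist Ω x := sdist_pos hΩo hne hx
  have habs : |sdist Ω x| < δ₀ := by rwa [abs_of_pos hpos]
  obtain ⟨z, hz, hxz, hDz⟩ :=
    exists_mem_frontier_dist_eq_gradient_eq hΩo hne hDd hDdnorm hx habs
  obtain ⟨α, hα, hσz, hdrift⟩ := hirr z hz
  have hHolder := hσ x (subset_closure hx) z (frontier_subset_closure hz) α hα
  rw [← dist_eq_norm, hxz] at hHolder
  have hσx : sigmaT (σ x α) (Dd x) ⬝ᵥ sigmaT (σ x α) (Dd x) ≤ B ^ 2 * sdist Ω x ^ (2 * β) :=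
    sigmaT_dotProduct_self_le_rpow hpos.le (hDdnorm x habs) (hDz ▸ hσz) hHolder
  have hlt_pow : (κ + 1) * B ^ 2 * sdist Ω x ^ (2 * β) < k * sdist Ω x ^ (γ + 1) :=
    hsmall ⟨hpos, hxρ⟩
  refine hlt_pow.not_ge ?_
  calc k * sdist Ω x ^ (γ + 1) = sdist Ω x * (k * sdist Ω x ^ γ) := by
        rw [Real.rpow_add_one hpos.ne']; ring
    _ ≤ sdist Ω x * (⟪b x α, Dd x⟫_ℝ + Matrix.trace (σ x α * (σ x α)ᵀ * D2d x)) :=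
        mul_le_mul_of_nonneg_left (hdrift x ⟨hx, Metric.mem_ball.2 (hxz.trans_lt hxδ)⟩) hpos.le
    _ ≤ (κ + 1) * (sigmaT (σ x α) (Dd x) ⬝ᵥ sigmaT (σ x α) (Dd x)) :=
        mul_inner_add_trace_le_of_isMaxOn_sub_mul_rpow_neg
          (hasHessianAt_sdist hDd (hD2d x habs) habs) hpos hε hκ
          (fun pX hpX => hsub x hx pX hpX α hα) hmax
    _ ≤ (κ + 1) * B ^ 2 * sdist Ω x ^ (2 * β) := by
        rw [mul_assoc]; gcongr

end BoundaryLayer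

theorem statement_12_general {n r : ℕ} {ι : Type*} {Ω : Set (EuclideanSpace ℝ (Fin n))}
    (hΩo : IsOpen Ω) (hΩne : Ω.Nonempty) (hΩbdd : Bornology.IsBounded Ω) {A : Set ι}
    {b : EuclideanSpace ℝ (Fin n) → ι → EuclideanSpace ℝ (Fin n)}
    {σ : EuclideanSpace ℝ (Fin n) → ι → Matrix (Fin n) (Fin r) ℝ} {δ₀ : ℝ} (hδ₀ : 0 < δ₀)
    {Dd : EuclideanSpace ℝ (Fin n) → EuclideanSpace ℝ (Fin n)}
    {D2d : EuclideanSpace ℝ (Fin n) → Matrix (Fin n) (Fin n) ℝ}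
    (hDd : ∀ x, |sdist Ω x| < δ₀ → HasGradientAt (sdist Ω) (Dd x) x)
    (hDdnorm : ∀ x, |sdist Ω x| < δ₀ → ‖Dd x‖ = 1)
    (hD2d : ∀ x, |sdist Ω x| < δ₀ →
      HasFDerivAt Dd (LinearMap.toContinuousLinearMap (Matrix.toEuclideanLin (D2d x))) x)
    {β B : ℝ} (hσ : ∀ x ∈ closure Ω, ∀ y ∈ closure Ω, ∀ α ∈ A,
      mnorm (σ x α - σ y α) ≤ B * ‖x - y‖ ^ β)
    (hirr : ∃ δ > (0 : ℝ), ∃ k > (0 : ℝ), ∃ γ : ℝ, γ < 2 * β - 1 ∧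
      ∀ z ∈ frontier Ω, ∃ α₀ ∈ A, sigmaT (σ z α₀) (Dd z) = 0 ∧
        ∀ x ∈ Ω ∩ Metric.ball z δ,
          k * sdist Ω x ^ γ ≤
            ⟪b x α₀, Dd x⟫_ℝ + Matrix.trace (σ x α₀ * (σ x α₀)ᵀ * D2d x))
    {u : EuclideanSpace ℝ (Fin n) → ℝ} (hu : UpperSemicontinuousOn u Ω)
    (hsub : ∀ x ∈ Ω, ∀ pX ∈ J2plus Ω u x, ∀ α ∈ A, linearOp (b x α) (σ x α) pX.1 pX.2 ≤ 0)
    {κ : ℝ} (hκ : 0 < κ)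
    (hgrowth : ∀ ε > (0 : ℝ), ∃ δ > (0 : ℝ),
      ∀ x ∈ Ω, sdist Ω x < δ → u x * sdist Ω x ^ κ ≤ ε) :
    ∃ x₀ ∈ Ω, ∀ x ∈ Ω, u x ≤ u x₀ := by
  rcases Nat.eq_zero_or_pos n with rfl | hn
  · exact hΩne.imp fun x₀ hx₀ => ⟨hx₀, fun x _ => by rw [Subsingleton.elim x x₀]⟩
  have : NeZero n := ⟨hn.ne'⟩
  have hne : Ωᶜ.Nonempty := Set.nonempty_compl.2 fun h =>
    NormedSpace.unbounded_univ ℝ (EuclideanSpace ℝ (Fin n)) (h ▸ hΩbdd)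
  have hpos : ∀ x ∈ Ω, 0 < sdist Ω x := fun x => sdist_pos hΩo hne
  obtain ⟨s, hs, hlayer⟩ := exists_forall_le_sdist_of_isMaxOn_sub_mul_rpow_neg hΩo hne hδ₀ hDd
    hDdnorm hD2d hσ hirr hsub hκ
  refine exists_isMaxOn_of_forall_exists_isMaxOn_sub_mul hu (isCompact_setOf_le_sdist hΩbdd hs)
    (Set.sep_subset _ _) (fun x hx => (Real.rpow_pos_of_pos (hpos x hx) (-κ)).le) fun ε hε => ?_
  obtain ⟨x, hx, hmax⟩ := exists_isMaxOn_sub_mul_rpow_neg hΩne hu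
    (continuous_sdist Ω).continuousOn hpos (fun _ => isCompact_setOf_le_sdist hΩbdd) hκ hgrowth hε
  exact ⟨x, ⟨hx, hlayer ε hε x hx hmax⟩, hmax⟩

theorem statement_12
    {n m r : ℕ} (Ω : Set (EuclideanSpace ℝ (Fin n)))
    (hΩo : IsOpen Ω) (hΩconn : IsConnected Ω) (hΩbdd : Bornology.IsBounded Ω)
    (A : Set (Fin m → ℝ)) (hA : IsClosed A) (hAne : A.Nonempty)
    (b : EuclideanSpace ℝ (Fin n) → (Fin m → ℝ) → EuclideanSpace ℝ (Fin n))
    (σ : EuclideanSpace ℝ (Fin n) → (Fin m → ℝ) → Matrix (Fin n) (Fin r) ℝ)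
    (hbBdd : ∃ C, ∀ x ∈ closure Ω, ∀ α ∈ A, ‖b x α‖ ≤ C)
    (hσBdd : ∃ C, ∀ x ∈ closure Ω, ∀ α ∈ A, mnorm (σ x α) ≤ C)
    (hbCont : ContinuousOn (fun q : EuclideanSpace ℝ (Fin n) × (Fin m → ℝ) => b q.1 q.2)
      (closure Ω ×ˢ A))
    (hσCont : ContinuousOn (fun q : EuclideanSpace ℝ (Fin n) × (Fin m → ℝ) => σ q.1 q.2)
      (closure Ω ×ˢ A))
    (δ₀ : ℝ) (hδ₀ : 0 < δ₀)
    (Dd : EuclideanSpace ℝ (Fin n) → EuclideanSpace ℝ (Fin n))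
    (D2d : EuclideanSpace ℝ (Fin n) → Matrix (Fin n) (Fin n) ℝ)
    (hDd : ∀ x, |sdist Ω x| < δ₀ → HasGradientAt (sdist Ω) (Dd x) x)
    (hDdnorm : ∀ x, |sdist Ω x| < δ₀ → ‖Dd x‖ = 1)
    (hD2d : ∀ x, |sdist Ω x| < δ₀ →
      HasFDerivAt Dd (LinearMap.toContinuousLinearMap (Matrix.toEuclideanLin (D2d x))) x)
    (hD2dCont : ContinuousOn D2d {x | |sdist Ω x| < δ₀})
    (ω : ℝ → ℝ) (hω0 : ω 0 = 0) (hωcont : ContinuousAt ω 0) (hωnn : ∀ s, 0 ≤ ω s)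
    (hreg22 : ∀ x ∈ closure Ω, ∀ y ∈ closure Ω, ∀ α ∈ A, ‖b x α - b y α‖ ≤ ω ‖x - y‖)
    (β B : ℝ) (hβlow : 1 / 2 < β) (hβhigh : β ≤ 1) (hB : 0 < B)
    (hreg2 : ∀ x ∈ closure Ω, ∀ y ∈ closure Ω, ∀ α ∈ A,
      mnorm (σ x α - σ y α) ≤ B * ‖x - y‖ ^ β)
    (hirr : ∃ δ > (0 : ℝ), ∃ k > (0 : ℝ), ∃ γ : ℝ, γ < 2 * β - 1 ∧
      ∀ z ∈ frontier Ω, ∃ α₀ ∈ A, sigmaT (σ z α₀) (Dd z) = 0 ∧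
        ∀ x ∈ Ω ∩ Metric.ball z δ,
          k * sdist Ω x ^ γ ≤
            ⟪b x α₀, Dd x⟫_ℝ + Matrix.trace (σ x α₀ * (σ x α₀)ᵀ * D2d x))
    (hSMP : ∀ w : EuclideanSpace ℝ (Fin n) → ℝ, UpperSemicontinuousOn w Ω →
      (∀ x ∈ Ω, ∀ pX ∈ J2plus Ω w x, Fop A b σ x pX.1 pX.2 ≤ 0) →
      (∃ x₀ ∈ Ω, ∀ x ∈ Ω, w x ≤ w x₀) → ∀ x ∈ Ω, ∀ y ∈ Ω, w x = w y)
    (u : EuclideanSpace ℝ (Fin n) → ℝ) (hu : UpperSemicontinuousOn u Ω)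
    (husub : ∀ x ∈ Ω, ∀ pX ∈ J2plus Ω u x, Fop A b σ x pX.1 pX.2 ≤ 0)
    (κ : ℝ) (hκ : 0 < κ)
    (hgrowth : ∀ ε > (0 : ℝ), ∃ δ > (0 : ℝ),
      ∀ x ∈ Ω, sdist Ω x < δ → u x * sdist Ω x ^ κ ≤ ε) :
    ∀ x ∈ Ω, ∀ y ∈ Ω, u x = u y := by
  refine hSMP u hu husub <| statement_12_general (A := A) (b := b) hΩo hΩconn.nonempty hΩbdd hδ₀
    hDd hDdnorm hD2d hreg2 hirr hu (fun x hx pX hpX α hα => ?_) hκ hgrowth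
  exact (linearOp_le_Fop (hbBdd.imp fun C hC => hC x (subset_closure hx))
    (hσBdd.imp fun C hC => hC x (subset_closure hx)) pX.1 pX.2 hα).trans (husub x hx pX hpX)
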